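/- For every t ≥ 1, the top-left n×n block M₁(t) of the product M(t) = P̂(t)⋯P̂(1) is row stochastic: all its entries are nonnegative and each of its rows sums to exactly 1. -/

import Mathlib

open Matrix Filter BigOperators
open scoped Classical

noncomputable section

/-- A directed graph on `Fin n` with `m` directed edges, edge `e` going from
`src e` to `tgt e`. -/
structure DGraph (n m : ℕ) where
  src : Fin m → Fin n
  tgt : Fin m → Fin n

/-- Hypotheses of the random-delay consensus model: no self-loops, distinct edges,
`P` row stochastic respecting `G` (hence with positive diagonal), and `G` strongly
connected. -/
structure DGraph.Valid {n m : ℕ} (G : DGraph n m) (P : Matrix (Fin n) (Fin n) ℝ) : Prop where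
  noSelf : ∀ e, G.src e ≠ G.tgt e
  edgeInj : ∀ e e', G.src e = G.src e' → G.tgt e = G.tgt e' → e = e'
  nonneg : ∀ i j, 0 ≤ P i j
  rowSum : ∀ i, ∑ j, P i j = 1
  support : ∀ i j, 0 < P i j ↔ i = j ∨ ∃ e, G.src e = j ∧ G.tgt e = i
  connected : ∀ i j : Fin n,
    Relation.ReflTransGen (fun a b => ∃ e, G.src e = a ∧ G.tgt e = b) i j

/-- Delay nodes: for every directed edge `e : Fin m`, every chain-length index
`ℓ : Fin B` (the parallel chain modelling a delay of `ℓ.1 + 1`), and every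
position `k : Fin B` with `k ≤ ℓ` along that chain.  There are `m·B(B+1)/2`
of them in total. -/
def DelayNode (m B : ℕ) : Type :=
  {q : Fin m × Fin B × Fin B // q.2.2.1 ≤ q.2.1.1}

instance (m B : ℕ) : Fintype (DelayNode m B) := by
  unfold DelayNode; infer_instance

instance (m B : ℕ) : DecidableEq (DelayNode m B) := by
  unfold DelayNode; infer_instance

namespace RandomDelay

variable {n m B : ℕ}

/-- The edge a delay node belongs to. -/
def edgeOf (d : DelayNode m B) : Fin m := d.val.1
/-- The chain (of length `lenIdx d + 1`) a delay node belongs to. -/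
def lenIdx (d : DelayNode m B) : ℕ := d.val.2.1.1
/-- The (0-indexed) position of a delay node along its chain. -/
def posIdx (d : DelayNode m B) : ℕ := d.val.2.2.1
/-- `d` is the terminal node of its chain. -/
def isTerminal (d : DelayNode m B) : Prop := d.val.2.2 = d.val.2.1

/-- The fixed block-diagonal forward-shift matrix `C`: a message at position `k`
of a chain moves to position `k+1` of the same chain. -/
def Cmat (m B : ℕ) : Matrix (DelayNode m B) (DelayNode m B) ℝ := fun d d' =>
  if d.val.1 = d'.val.1 ∧ d.val.2.1 = d'.val.2.1 ∧ posIdx d = posIdx d' + 1 then 1 else 0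

/-- The fixed delivery matrix `J`: `J i d = 1` iff `d` is the terminal node of a
chain on an edge pointing into compute node `i`. -/
def Jmat (G : DGraph n m) (B : ℕ) : Matrix (Fin n) (DelayNode m B) ℝ := fun i d =>
  if G.tgt (edgeOf d) = i ∧ isTerminal d then 1 else 0

/-- `L(t)`: zero-delay deliveries.  `L t i j = 1` iff at iteration `t` node `j`
sends its message on the edge `j → i` with zero delay. -/
def Lmat (G : DGraph n m) (del : ℕ → Fin m → Fin (B + 1)) (t : ℕ) :
    Matrix (Fin n) (Fin n) ℝ := fun i j =>
  if ∃ e, G.src e = j ∧ G.tgt e = i ∧ (del t e).1 = 0 then 1 else 0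

/-- `R(t)`: routing of messages into delay chains.  `R t d j = 1` iff `d` is the
first node of the chain of length `ℓ+1` on an edge out of `j`, and at iteration
`t` node `j`'s message on that edge is assigned delay `ℓ+1`. -/
def Rmat (G : DGraph n m) (del : ℕ → Fin m → Fin (B + 1)) (t : ℕ) :
    Matrix (DelayNode m B) (Fin n) ℝ := fun d j =>
  if G.src (edgeOf d) = j ∧ posIdx d = 0 ∧ (del t (edgeOf d)).1 = lenIdx d + 1 then 1 else 0

/-- Occupancy vector: `φ 0 = 0` and `φ t = R(t)·1 + C·φ(t-1)`. -/
def phi (G : DGraph n m) (del : ℕ → Fin m → Fin (B + 1)) : ℕ → DelayNode m B → ℝ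
  | 0 => fun _ => 0
  | t + 1 => Rmat G del (t + 1) *ᵥ (fun _ => 1) + Cmat m B *ᵥ phi G del t

/-- `ŵ_{ij}(t)`: the number of delay chains from `j` to `i` whose terminal node is
occupied at time `t - 1`, i.e. the number of delayed messages `i` receives from `j`
at iteration `t`. -/
def wgt (G : DGraph n m) (del : ℕ → Fin m → Fin (B + 1)) (t : ℕ) (i j : Fin n) : ℕ :=
  (Finset.univ.filter (fun d : DelayNode m B =>
    G.tgt (edgeOf d) = i ∧ G.src (edgeOf d) = j ∧ isTerminal d ∧
      phi G del (t - 1) d = 1)).card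

/-- Total number of messages (delayed plus undelayed) that `i` receives from `j`
at iteration `t`, as a real number. -/
def denom (G : DGraph n m) (del : ℕ → Fin m → Fin (B + 1)) (t : ℕ) (i j : Fin n) : ℝ :=
  (wgt G del t i j : ℝ) + Lmat G del t i j

/-- `P̄[L(t)]`: each entry `1` of `L(t)` (a zero-delay message from `j` to `i`) is
replaced with the weight `P i j / (ŵ_{ij} + L_{ij}(t))`. -/
def PLmat (G : DGraph n m) (P : Matrix (Fin n) (Fin n) ℝ)
    (del : ℕ → Fin m → Fin (B + 1)) (t : ℕ) : Matrix (Fin n) (Fin n) ℝ := fun i j =>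
  Lmat G del t i j * (P i j / denom G del t i j)

/-- `P̄[φ(t-1)]`: each entry `1` of `J·diag(φ(t-1))` (a delayed message from `j`
delivered to `i`) is replaced with the weight `P i j / (ŵ_{ij} + L_{ij}(t))`. -/
def PFmat (G : DGraph n m) (P : Matrix (Fin n) (Fin n) ℝ)
    (del : ℕ → Fin m → Fin (B + 1)) (t : ℕ) : Matrix (Fin n) (DelayNode m B) ℝ := fun i d =>
  Jmat G B i d * phi G del (t - 1) d *
    (P i (G.src (edgeOf d)) / denom G del t i (G.src (edgeOf d)))

/-- Top-left block `P̂₁₁(t) = I − diag(P̄[φ(t−1)]·1_b + P̄[L(t)]·1_n) + P̄[L(t)]`. -/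
def P11 (G : DGraph n m) (P : Matrix (Fin n) (Fin n) ℝ)
    (del : ℕ → Fin m → Fin (B + 1)) (t : ℕ) : Matrix (Fin n) (Fin n) ℝ :=
  1 - Matrix.diagonal (fun i => (∑ d, PFmat G P del t i d) + (∑ j, PLmat G P del t i j))
    + PLmat G P del t

/-- The delayed transition matrix
`P̂(t) = [[P̂₁₁(t), P̄[φ(t−1)]], [R(t), C]]`. -/
def Phat (G : DGraph n m) (P : Matrix (Fin n) (Fin n) ℝ)
    (del : ℕ → Fin m → Fin (B + 1)) (t : ℕ) :
    Matrix (Fin n ⊕ DelayNode m B) (Fin n ⊕ DelayNode m B) ℝ :=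
  Matrix.fromBlocks (P11 G P del t) (PFmat G P del t) (Rmat G del t) (Cmat m B)

/-- The state: `x̂(0) = (x(0), 0_b)` and `x̂(t) = P̂(t)·x̂(t−1)`. -/
def xhat (G : DGraph n m) (P : Matrix (Fin n) (Fin n) ℝ)
    (del : ℕ → Fin m → Fin (B + 1)) (x0 : Fin n → ℝ) :
    ℕ → (Fin n ⊕ DelayNode m B) → ℝ
  | 0 => Sum.elim x0 (fun _ => 0)
  | t + 1 => Phat G P del (t + 1) *ᵥ xhat G P del x0 t

/-- The product `M(t) = P̂(t)·P̂(t−1)⋯P̂(1)` (with `M(0) = I`). -/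
def Mprod (G : DGraph n m) (P : Matrix (Fin n) (Fin n) ℝ)
    (del : ℕ → Fin m → Fin (B + 1)) :
    ℕ → Matrix (Fin n ⊕ DelayNode m B) (Fin n ⊕ DelayNode m B) ℝ
  | 0 => 1
  | t + 1 => Phat G P del (t + 1) * Mprod G P del t

/-- Top-left `n × n` block of `M(t)`. -/
def M1 (G : DGraph n m) (P : Matrix (Fin n) (Fin n) ℝ)
    (del : ℕ → Fin m → Fin (B + 1)) (t : ℕ) : Matrix (Fin n) (Fin n) ℝ :=
  fun i j => Mprod G P del t (Sum.inl i) (Sum.inl j)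

/-- Bottom-left `b × n` block of `M(t)`. -/
def M2 (G : DGraph n m) (P : Matrix (Fin n) (Fin n) ℝ)
    (del : ℕ → Fin m → Fin (B + 1)) (t : ℕ) : Matrix (DelayNode m B) (Fin n) ℝ :=
  fun d j => Mprod G P del t (Sum.inr d) (Sum.inl j)

/-- A node is occupied at time `t` if it is a compute node, or a delay node `d`
with `φ_d(t) = 1`. -/
def occupied (G : DGraph n m) (del : ℕ → Fin m → Fin (B + 1)) (t : ℕ) :
    (Fin n ⊕ DelayNode m B) → Prop
  | Sum.inl _ => True
  | Sum.inr d => phi G del t d = 1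

/-- Maximum of the state over the occupied nodes at time `t`. -/
def occMax (G : DGraph n m) (P : Matrix (Fin n) (Fin n) ℝ)
    (del : ℕ → Fin m → Fin (B + 1)) (x0 : Fin n → ℝ) (t : ℕ) : ℝ :=
  sSup {y : ℝ | ∃ v, occupied G del t v ∧ xhat G P del x0 t v = y}

/-- Minimum of the state over the occupied nodes at time `t`. -/
def occMin (G : DGraph n m) (P : Matrix (Fin n) (Fin n) ℝ)
    (del : ℕ → Fin m → Fin (B + 1)) (x0 : Fin n → ℝ) (t : ℕ) : ℝ :=
  sInf {y : ℝ | ∃ v, occupied G del t v ∧ xhat G P del x0 t v = y}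

end RandomDelay

end

/-!
Send the indicator of the occupied nodes through the network. A compute node keeps for itself
whatever weight it does not give to incoming messages, and it gives weight only to those delay
nodes that are occupied, so `P̂(t)` carries the occupancy indicator at time `t - 1` to the one at
time `t`. At time `0` only the compute nodes are occupied, hence the rows of `M₁(t)` sum to `1`.
Nonnegativity is an entrywise matter: the messages from `j` to `i` share the weight `P i j`, so the
weights used by `i` total at most `∑ j, P i j ≤ 1` and `i` retains a nonnegative share.
-/

namespace RandomDelay

variable {n m B : ℕ} (G : DGraph n m) {P : Matrix (Fin n) (Fin n) ℝ}
  (del : ℕ → Fin m → Fin (B + 1))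

/-- The predecessor of a delay node along its chain. Because of the truncated subtraction, the
first node of a chain is its own predecessor. -/
def prevNode (d : DelayNode m B) : DelayNode m B :=
  ⟨(d.val.1, d.val.2.1, ⟨posIdx d - 1, (Nat.sub_le _ _).trans_lt d.val.2.2.isLt⟩),
    (Nat.sub_le _ _).trans d.prop⟩

/-- The indicator of the occupied nodes at time `t`, as a state of the augmented network. -/
def occupancy (t : ℕ) : Fin n ⊕ DelayNode m B → ℝ :=
  Sum.elim 1 (phi G del t)

theorem eq_prevNode_iff {d d' : DelayNode m B} (hd : posIdx d ≠ 0) :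
    d' = prevNode d ↔
      d.val.1 = d'.val.1 ∧ d.val.2.1 = d'.val.2.1 ∧ posIdx d = posIdx d' + 1 := by
  refine Subtype.ext_iff.trans <| Prod.ext_iff.trans <| and_congr eq_comm <|
    Prod.ext_iff.trans <| and_congr eq_comm <| Fin.ext_iff.trans ?_
  change posIdx d' = posIdx d - 1 ↔ _
  omega

theorem Cmat_mulVec_apply (v : DelayNode m B → ℝ) (d : DelayNode m B) :
    (Cmat m B *ᵥ v) d = if posIdx d = 0 then 0 else v (prevNode d) := by
  split_ifs with hd
  · simp [Matrix.mulVec, dotProduct, Cmat, hd]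
  · simp [Matrix.mulVec, dotProduct, Cmat, ← eq_prevNode_iff hd]

theorem Rmat_mulVec_one_apply (t : ℕ) (d : DelayNode m B) :
    (Rmat G del t *ᵥ 1) d =
      if posIdx d = 0 ∧ (del t (edgeOf d)).1 = lenIdx d + 1 then 1 else 0 := by
  simp [Matrix.mulVec, dotProduct, Rmat, ite_and]

theorem phi_succ_apply (t : ℕ) (d : DelayNode m B) :
    phi G del (t + 1) d =
      if posIdx d = 0 then if (del (t + 1) (edgeOf d)).1 = lenIdx d + 1 then 1 else 0
      else phi G del t (prevNode d) := by
  change (Rmat G del (t + 1) *ᵥ 1) d + (Cmat m B *ᵥ phi G del t) d = _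
  rw [Rmat_mulVec_one_apply, Cmat_mulVec_apply, ite_and]
  split_ifs <;> simp

theorem phi_eq_zero_or_one (t : ℕ) (d : DelayNode m B) :
    phi G del t d = 0 ∨ phi G del t d = 1 := by
  induction t generalizing d with
  | zero => exact Or.inl rfl
  | succ t ih =>
    rw [phi_succ_apply]
    split_ifs
    exacts [Or.inr rfl, Or.inl rfl, ih _]

theorem Lmat_nonneg (t : ℕ) (i j : Fin n) : 0 ≤ Lmat G del t i j :=
  ite_nonneg zero_le_one le_rfl

theorem denom_nonneg (t : ℕ) (i j : Fin n) : 0 ≤ denom G del t i j :=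
  add_nonneg (Nat.cast_nonneg _) (Lmat_nonneg G del t i j)

theorem PLmat_nonneg (hP : ∀ i j, 0 ≤ P i j) (t : ℕ) (i j : Fin n) :
    0 ≤ PLmat G P del t i j :=
  mul_nonneg (Lmat_nonneg G del t i j) (div_nonneg (hP i j) (denom_nonneg G del t i j))

variable (P) in
theorem PFmat_apply (t : ℕ) (i : Fin n) (d : DelayNode m B) :
    PFmat G P del t i d =
      if G.tgt (edgeOf d) = i ∧ isTerminal d ∧ phi G del (t - 1) d = 1 then
        P i (G.src (edgeOf d)) / denom G del t i (G.src (edgeOf d))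
      else 0 := by
  rcases phi_eq_zero_or_one G del (t - 1) d with h | h <;> simp [PFmat, Jmat, h]

theorem PFmat_nonneg (hP : ∀ i j, 0 ≤ P i j) (t : ℕ) (i : Fin n) (d : DelayNode m B) :
    0 ≤ PFmat G P del t i d := by
  rw [PFmat_apply]
  exact ite_nonneg (div_nonneg (hP _ _) (denom_nonneg G del t _ _)) le_rfl

variable (P) in
theorem sum_PFmat (t : ℕ) (i : Fin n) :
    ∑ d, PFmat G P del t i d = ∑ j, (wgt G del t i j : ℝ) * (P i j / denom G del t i j) := by
  rw [← Finset.sum_fiberwise Finset.univ (fun d : DelayNode m B => G.src (edgeOf d))]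
  refine Finset.sum_congr rfl fun j _ => ?_
  rw [wgt, ← nsmul_eq_mul, ← Finset.sum_const, Finset.sum_filter, Finset.sum_filter]
  refine Finset.sum_congr rfl fun d _ => ?_
  rw [PFmat_apply]
  by_cases hj : G.src (edgeOf d) = j <;> simp [hj]

theorem sum_PFmat_add_sum_PLmat_le (hP : ∀ i j, 0 ≤ P i j) (t : ℕ) (i : Fin n) :
    ∑ d, PFmat G P del t i d + ∑ j, PLmat G P del t i j ≤ ∑ j, P i j := by
  rw [sum_PFmat, ← Finset.sum_add_distrib]
  refine Finset.sum_le_sum fun j _ => ?_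
  rw [PLmat, ← add_mul, ← denom]
  -- If `i` receives nothing from `j`, the weight `P i j / 0` is `0` by convention.
  rcases eq_or_ne (denom G del t i j) 0 with h | h
  · simpa [h] using hP i j
  · rw [mul_div_cancel₀ _ h]

theorem P11_nonneg (hP : ∀ i j, 0 ≤ P i j) (hsum : ∀ i, ∑ j, P i j ≤ 1) (t : ℕ)
    (i j : Fin n) : 0 ≤ P11 G P del t i j := by
  have hL := PLmat_nonneg G del hP t i j
  rcases eq_or_ne i j with rfl | hij
  · have hused : ∑ d, PFmat G P del t i d + ∑ j, PLmat G P del t i j ≤ 1 :=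
      (sum_PFmat_add_sum_PLmat_le G del hP t i).trans (hsum i)
    simpa [P11] using add_nonneg (sub_nonneg.2 hused) hL
  · simpa [P11, hij] using hL

theorem Phat_nonneg (hP : ∀ i j, 0 ≤ P i j) (hsum : ∀ i, ∑ j, P i j ≤ 1) (t : ℕ)
    (u v : Fin n ⊕ DelayNode m B) : 0 ≤ Phat G P del t u v :=
  match u, v with
  | .inl i, .inl j => P11_nonneg G del hP hsum t i j
  | .inl i, .inr d => PFmat_nonneg G del hP t i d
  | .inr _, .inl _ | .inr _, .inr _ => ite_nonneg zero_le_one le_rfl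

theorem Mprod_nonneg (hP : ∀ i j, 0 ≤ P i j) (hsum : ∀ i, ∑ j, P i j ≤ 1) (t : ℕ)
    (u v : Fin n ⊕ DelayNode m B) : 0 ≤ Mprod G P del t u v := by
  induction t generalizing u with
  | zero => exact ite_nonneg zero_le_one le_rfl
  | succ t ih =>
    exact Finset.sum_nonneg fun w _ => mul_nonneg (Phat_nonneg G del hP hsum _ u w) (ih w)

variable (P)

theorem PFmat_succ_mulVec_phi_apply (t : ℕ) (i : Fin n) :
    (PFmat G P del (t + 1) *ᵥ phi G del t) i = ∑ d, PFmat G P del (t + 1) i d := by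
  refine Finset.sum_congr rfl fun d _ => ?_
  rcases phi_eq_zero_or_one G del t d with h | h <;> simp [PFmat, h]

theorem P11_mulVec_one_apply (t : ℕ) (i : Fin n) :
    (P11 G P del t *ᵥ 1) i = 1 - ∑ d, PFmat G P del t i d := by
  have hL : (PLmat G P del t *ᵥ 1) i = ∑ j, PLmat G P del t i j := by
    simp [Matrix.mulVec, dotProduct]
  rw [P11, Matrix.add_mulVec, Matrix.sub_mulVec, Matrix.one_mulVec, Pi.add_apply, Pi.sub_apply,
    Matrix.mulVec_diagonal, hL, Pi.one_apply]
  ring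

theorem Phat_mulVec_occupancy (t : ℕ) :
    Phat G P del (t + 1) *ᵥ occupancy G del t = occupancy G del (t + 1) := by
  have hcompute : P11 G P del (t + 1) *ᵥ 1 + PFmat G P del (t + 1) *ᵥ phi G del t = 1 := by
    funext i
    rw [Pi.add_apply, P11_mulVec_one_apply, PFmat_succ_mulVec_phi_apply, sub_add_cancel,
      Pi.one_apply]
  rw [Phat, occupancy, Matrix.fromBlocks_mulVec, Sum.elim_comp_inl, Sum.elim_comp_inr, hcompute]
  rfl

theorem Mprod_mulVec_occupancy (t : ℕ) :
    Mprod G P del t *ᵥ occupancy G del 0 = occupancy G del t := by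
  induction t with
  | zero => exact Matrix.one_mulVec _
  | succ t ih => rw [Mprod, ← Matrix.mulVec_mulVec, ih, Phat_mulVec_occupancy]

theorem M1_mulVec_one (t : ℕ) : M1 G P del t *ᵥ 1 = 1 := by
  funext i
  simpa [occupancy, phi, Matrix.mulVec, dotProduct, M1] using
    congrFun (Mprod_mulVec_occupancy G P del t) (Sum.inl i)

end RandomDelay

open RandomDelay in
theorem random_delay_M1_row_stochastic_general {n m B : ℕ} (G : DGraph n m)
    {P : Matrix (Fin n) (Fin n) ℝ} (hP : ∀ i j, 0 ≤ P i j) (hsum : ∀ i, ∑ j, P i j ≤ 1)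
    (del : ℕ → Fin m → Fin (B + 1)) (t : ℕ) :
    M1 G P del t ∈ rowStochastic ℝ (Fin n) :=
  Matrix.mem_rowStochastic.2
    ⟨fun _ _ => Mprod_nonneg G del hP hsum t _ _, M1_mulVec_one G P del t⟩

open RandomDelay in
/-- **`M₁(t)` is row stochastic.**  For every `t ≥ 1`, the top-left `n × n` block
`M₁(t)` of the product `M(t) = P̂(t)⋯P̂(1)` has nonnegative entries and each of its
rows sums to exactly `1`. -/
theorem random_delay_M1_row_stochastic
    {n m B : ℕ} (hn : 0 < n) (hB : 1 ≤ B)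
    (G : DGraph n m) (P : Matrix (Fin n) (Fin n) ℝ) (hV : G.Valid P)
    (del : ℕ → Fin m → Fin (B + 1)) (t : ℕ) (ht : 1 ≤ t) :
    (∀ i j, 0 ≤ M1 G P del t i j) ∧ (∀ i, ∑ j, M1 G P del t i j = 1) :=
  Matrix.mem_rowStochastic_iff_sum.1 <|
    random_delay_M1_row_stochastic_general G hV.nonneg (fun i => (hV.rowSum i).le) del t
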